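/- If u ∈ 𝒜₃ and v ∈ 𝒜₂, then there is a constant c̃_* ≥ 1, depending only on the C³-norm ‖u‖₃ and the C²-norm ‖v‖₂ (and independent of α₀, H₁, H₂), such that ‖∂^α(uv)‖₀ ≤ c̃_* H₁^{α₁−2} H₂^{α₂} [(|α|−3)!]^s for every α = (α₁,α₂) ≤ α₀ with |α| ≥ 3 (i.e. c̃_*^{−1} uv ∈ 𝒜₂). -/

import Mathlib

open Set

noncomputable section

/-- The closed strip `R̄ = ℝ × [p₀, 0]`. -/
def Strip (p₀ : ℝ) : Set (ℝ × ℝ) := {z : ℝ × ℝ | p₀ ≤ z.2 ∧ z.2 ≤ 0}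

/-- The mixed partial derivative `∂_q^a ∂_p^b f` of `f : ℝ² → ℝ` within the set `S`,
realized as the iterated Fréchet derivative within `S` applied to the corresponding
coordinate directions. -/
def mpw (S : Set (ℝ × ℝ)) (a b : ℕ) (f : ℝ × ℝ → ℝ) (z : ℝ × ℝ) : ℝ :=
  iteratedFDerivWithin ℝ (a + b) f S z
    (fun i => if (i : ℕ) < a then ((1 : ℝ), (0 : ℝ)) else ((0 : ℝ), (1 : ℝ)))

/-- `∂_q^a ∂_p^b f` within the strip `R̄`. -/
def pd (p₀ : ℝ) (a b : ℕ) (f : ℝ × ℝ → ℝ) : ℝ × ℝ → ℝ := mpw (Strip p₀) a b f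

/-- Euclidean distance on `ℝ²`. -/
def edist2 (z z' : ℝ × ℝ) : ℝ := Real.sqrt ((z.1 - z'.1) ^ 2 + (z.2 - z'.2) ^ 2)

/-- `sup_{R̄} |f|`. -/
def supS (p₀ : ℝ) (f : ℝ × ℝ → ℝ) : ℝ := sSup ((fun z => |f z|) '' Strip p₀)

/-- The Hölder seminorm of exponent `μ` of `f` over the strip `R̄`. -/
def hsemi (p₀ μ : ℝ) (f : ℝ × ℝ → ℝ) : ℝ :=
  sSup {y | ∃ z ∈ Strip p₀, ∃ z' ∈ Strip p₀, z ≠ z' ∧ y = |f z - f z'| / (edist2 z z') ^ μ}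

/-- The `C^k` sup-norm `‖f‖_k = Σ_{|α| ≤ k} sup_{R̄} |∂^α f|`. -/
def cknorm (p₀ : ℝ) (k : ℕ) (f : ℝ × ℝ → ℝ) : ℝ :=
  ∑ a ∈ Finset.range (k + 1), ∑ b ∈ Finset.range (k + 1 - a), supS p₀ (pd p₀ a b f)

/-- The Hölder norm `‖f‖_{k,μ} = ‖f‖_k + max_{|α| = k} [∂^α f]_μ`. -/
def hnorm (p₀ μ : ℝ) (k : ℕ) (f : ℝ × ℝ → ℝ) : ℝ :=
  cknorm p₀ k f + sSup {y | ∃ a b : ℕ, a + b = k ∧ y = hsemi p₀ μ (pd p₀ a b f)}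

/-- Boundedness of `f` on the strip (finiteness of `sup_{R̄} |f|`). -/
def bddS (p₀ : ℝ) (f : ℝ × ℝ → ℝ) : Prop := BddAbove ((fun z => |f z|) '' Strip p₀)

/-- Finiteness of the Hölder seminorm of `f` on the strip. -/
def bddH (p₀ μ : ℝ) (f : ℝ × ℝ → ℝ) : Prop :=
  BddAbove {y | ∃ z ∈ Strip p₀, ∃ z' ∈ Strip p₀, z ≠ z' ∧ y = |f z - f z'| / (edist2 z z') ^ μ}

/-- Finiteness of the `C^{k,μ}(R̄)` norm. -/
def finCk (p₀ μ : ℝ) (k : ℕ) (f : ℝ × ℝ → ℝ) : Prop :=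
  (∀ a b : ℕ, a + b ≤ k → bddS p₀ (pd p₀ a b f)) ∧
  (∀ a b : ℕ, a + b = k → bddH p₀ μ (pd p₀ a b f))

/-- Membership in `C^{k,μ}(R̄)`: `k` times continuously differentiable on the strip with
bounded derivatives, the top-order ones Hölder continuous of exponent `μ`. -/
def MemCk (p₀ μ : ℝ) (k : ℕ) (f : ℝ × ℝ → ℝ) : Prop :=
  ContDiffOn ℝ k f (Strip p₀) ∧ finCk p₀ μ k f

/-- The class `𝒜_j`: functions `f ∈ C^{|α₀|,μ}(R̄)` such that
`‖∂^α f‖₀ ≤ H₁^{α₁−j} H₂^{α₂} [(|α|−j−1)!]^s` for every `α ≤ α₀` with `|α| ≥ j+1`. -/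
def memA (p₀ μ s H₁ H₂ : ℝ) (α₀ : ℕ × ℕ) (j : ℕ) (f : ℝ × ℝ → ℝ) : Prop :=
  MemCk p₀ μ (α₀.1 + α₀.2) f ∧
  ∀ a b : ℕ, a ≤ α₀.1 → b ≤ α₀.2 → j + 1 ≤ a + b →
    ∀ z ∈ Strip p₀, |pd p₀ a b f z| ≤
      H₁ ^ ((a : ℤ) - (j : ℤ)) * H₂ ^ b * (Nat.factorial (a + b - (j + 1)) : ℝ) ^ s


lemma strip_uniq (p₀ : ℝ) (hp₀ : p₀ < 0) : UniqueDiffOn ℝ (Strip p₀) := by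
  have : Strip p₀ = Set.univ ×ˢ Set.Icc p₀ 0 := by
    ext z; simp [Strip]
  rw [this]
  exact uniqueDiffOn_univ.prod (uniqueDiffOn_Icc hp₀)

/-- generalized -/
def dD (S : Set (ℝ × ℝ)) (n a : ℕ) (f : ℝ × ℝ → ℝ) (z : ℝ × ℝ) : ℝ :=
  iteratedFDerivWithin ℝ n f S z
    (fun i => if (i : ℕ) < a then ((1 : ℝ), (0 : ℝ)) else ((0 : ℝ), (1 : ℝ)))

lemma pd_eq (p₀ : ℝ) (a b : ℕ) (f : ℝ × ℝ → ℝ) : pd p₀ a b f = dD (Strip p₀) (a + b) a f := rfl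

lemma dD_diff {S : Set (ℝ × ℝ)} (hS : UniqueDiffOn ℝ S) {N n a : ℕ} {f : ℝ × ℝ → ℝ}
    (hf : ContDiffOn ℝ N f S) (hn : n < N) : DifferentiableOn ℝ (dD S n a f) S := by
  have h := hf.differentiableOn_iteratedFDerivWithin (m := n) (by exact_mod_cast hn) hS
  intro z hz
  exact ((ContinuousMultilinearMap.apply ℝ (fun _ : Fin n => ℝ × ℝ) ℝ _).differentiableAt).comp_differentiableWithinAt z (h z hz)

lemma dD_succ {S : Set (ℝ × ℝ)} (hS : UniqueDiffOn ℝ S) {N n a : ℕ} {f : ℝ × ℝ → ℝ}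
    (hf : ContDiffOn ℝ N f S) (hn : n < N) {z : ℝ × ℝ} (hz : z ∈ S) :
    dD S (n + 1) a f z = fderivWithin ℝ (dD S n (a - 1) f) S z
      (if 0 < a then ((1 : ℝ), (0 : ℝ)) else ((0 : ℝ), (1 : ℝ))) := by
  have h := hf.differentiableOn_iteratedFDerivWithin (m := n) (by exact_mod_cast hn) hS z hz
  unfold dD
  rw [iteratedFDerivWithin_succ_apply_left]
  set m : Fin n → ℝ × ℝ := (fun i => if (i : ℕ) < a - 1 then ((1 : ℝ), (0 : ℝ)) else ((0 : ℝ), (1 : ℝ))) with hm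
  have h2 := ((ContinuousMultilinearMap.apply ℝ (fun _ : Fin n => ℝ × ℝ) ℝ m).hasFDerivAt).comp_hasFDerivWithinAt z h.hasFDerivWithinAt
  have h3 := h2.fderivWithin (hS z hz)
  have h4 : fderivWithin ℝ (fun z => iteratedFDerivWithin ℝ n f S z m) S z = (ContinuousMultilinearMap.apply ℝ (fun _ : Fin n => ℝ × ℝ) ℝ m).comp (fderivWithin ℝ (iteratedFDerivWithin ℝ n f S) S z) := h3
  rw [h4]
  have hmt : Fin.tail (fun i : Fin (n+1) => if (i : ℕ) < a then ((1 : ℝ), (0 : ℝ)) else ((0 : ℝ), (1 : ℝ))) = m := by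
    funext i
    simp only [Fin.tail, hm, Fin.val_succ]
    congr 1
    simp only [eq_iff_iff]; omega
  rw [hmt]
  simp
  rfl

lemma pd_succ_left {p₀ : ℝ} (hp₀ : p₀ < 0) {N a b : ℕ} {f : ℝ × ℝ → ℝ}
    (hf : ContDiffOn ℝ N f (Strip p₀)) (hn : a + b < N) {z : ℝ × ℝ} (hz : z ∈ Strip p₀) :
    pd p₀ (a + 1) b f z = fderivWithin ℝ (pd p₀ a b f) (Strip p₀) z ((1 : ℝ), (0 : ℝ)) := by
  rw [pd_eq, pd_eq, show a + 1 + b = a + b + 1 by ring, dD_succ (strip_uniq p₀ hp₀) hf hn hz]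
  simp

lemma pd_succ_right {p₀ : ℝ} (hp₀ : p₀ < 0) {N b : ℕ} {f : ℝ × ℝ → ℝ}
    (hf : ContDiffOn ℝ N f (Strip p₀)) (hn : b < N) {z : ℝ × ℝ} (hz : z ∈ Strip p₀) :
    pd p₀ 0 (b + 1) f z = fderivWithin ℝ (pd p₀ 0 b f) (Strip p₀) z ((0 : ℝ), (1 : ℝ)) := by
  rw [pd_eq, pd_eq, show 0 + (b + 1) = 0 + b + 1 by ring,
    dD_succ (strip_uniq p₀ hp₀) hf (by omega) hz]
  simp

lemma pd_diff {p₀ : ℝ} (hp₀ : p₀ < 0) {N a b : ℕ} {f : ℝ × ℝ → ℝ}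
    (hf : ContDiffOn ℝ N f (Strip p₀)) (hn : a + b < N) :
    DifferentiableOn ℝ (pd p₀ a b f) (Strip p₀) :=
  dD_diff (strip_uniq p₀ hp₀) hf hn

open Finset in
/-- derivative of a sum of products -/
lemma deriv_sum_mul {S : Set (ℝ × ℝ)} (hS : UniqueDiffOn ℝ S) {ι : Type*} (T : Finset ι)
    (c : ι → ℝ) (F G : ι → ℝ × ℝ → ℝ) {z : ℝ × ℝ} (hz : z ∈ S)
    (hF : ∀ i ∈ T, DifferentiableWithinAt ℝ (F i) S z)
    (hG : ∀ i ∈ T, DifferentiableWithinAt ℝ (G i) S z) (e : ℝ × ℝ) :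
    fderivWithin ℝ (fun y => ∑ i ∈ T, c i * (F i y * G i y)) S z e =
      ∑ i ∈ T, c i * (F i z * fderivWithin ℝ (G i) S z e + fderivWithin ℝ (F i) S z e * G i z) := by
  have h : HasFDerivWithinAt (fun y => ∑ i ∈ T, c i * (F i y * G i y))
      (∑ i ∈ T, c i • (F i z • fderivWithin ℝ (G i) S z + G i z • fderivWithin ℝ (F i) S z)) S z := by
    apply HasFDerivWithinAt.fun_sum
    intro i hi
    exact (((hF i hi).hasFDerivWithinAt).mul ((hG i hi).hasFDerivWithinAt)).const_mul (c i)
  rw [h.fderivWithin (hS z hz)]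
  simp [mul_comm, mul_add]

open Finset in
lemma leib0 {p₀ : ℝ} (hp₀ : p₀ < 0) {N : ℕ} {u v : ℝ × ℝ → ℝ}
    (hu : ContDiffOn ℝ N u (Strip p₀)) (hv : ContDiffOn ℝ N v (Strip p₀)) (b : ℕ) (hb : b ≤ N) :
    ∀ z ∈ Strip p₀, pd p₀ 0 b (fun y => u y * v y) z =
      ∑ j ∈ antidiagonal b, (b.choose j.1 : ℝ) * (pd p₀ 0 j.1 u z * pd p₀ 0 j.2 v z) := by
  induction b with
  | zero => intro z hz; simp [pd, mpw]
  | succ b ih =>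
    intro z hz
    rw [pd_succ_right hp₀ (hu.mul hv) (by omega) hz,
      fderivWithin_congr (ih (by omega)) (ih (by omega) z hz),
      deriv_sum_mul (strip_uniq p₀ hp₀) (antidiagonal b) (fun j => (b.choose j.1 : ℝ))
        (fun j => pd p₀ 0 j.1 u) (fun j => pd p₀ 0 j.2 v) hz,
      sum_antidiagonal_choose_succ_mul (fun i j => pd p₀ 0 i u z * pd p₀ 0 j v z),
      ← sum_add_distrib]
    · refine sum_congr rfl fun j hj => ?_
      have hj' := mem_antidiagonal.1 hj
      rw [pd_succ_right hp₀ hu (by omega) hz, pd_succ_right hp₀ hv (by omega) hz,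
        ← Nat.choose_symm_of_eq_add hj'.symm]
      ring
    · intro j hj
      have hj' := mem_antidiagonal.1 hj
      exact pd_diff hp₀ hu (by omega) z hz
    · intro j hj
      have hj' := mem_antidiagonal.1 hj
      exact pd_diff hp₀ hv (by omega) z hz

open Finset in
lemma leib {p₀ : ℝ} (hp₀ : p₀ < 0) {N : ℕ} {u v : ℝ × ℝ → ℝ}
    (hu : ContDiffOn ℝ N u (Strip p₀)) (hv : ContDiffOn ℝ N v (Strip p₀)) (a b : ℕ)
    (hb : a + b ≤ N) :
    ∀ z ∈ Strip p₀, pd p₀ a b (fun y => u y * v y) z =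
      ∑ i ∈ antidiagonal a, (a.choose i.1 : ℝ) * ∑ j ∈ antidiagonal b, (b.choose j.1 : ℝ) *
        (pd p₀ i.1 j.1 u z * pd p₀ i.2 j.2 v z) := by
  induction a with
  | zero => intro z hz; simpa using leib0 hp₀ hu hv b (by omega) z hz
  | succ a ih =>
    have ih' : ∀ z ∈ Strip p₀, pd p₀ a b (fun y => u y * v y) z =
      ∑ x ∈ antidiagonal a ×ˢ antidiagonal b, ((a.choose x.1.1 : ℝ) * (b.choose x.2.1 : ℝ)) *
        (pd p₀ x.1.1 x.2.1 u z * pd p₀ x.1.2 x.2.2 v z) := by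
      intro z hz
      rw [ih (by omega) z hz, sum_product]
      simp only [mul_sum, mul_assoc]
    intro z hz
    rw [pd_succ_left hp₀ (hu.mul hv) (by omega) hz,
      fderivWithin_congr ih' (ih' z hz),
      deriv_sum_mul (strip_uniq p₀ hp₀) (antidiagonal a ×ˢ antidiagonal b)
        (fun x => (a.choose x.1.1 : ℝ) * (b.choose x.2.1 : ℝ)) (fun x => pd p₀ x.1.1 x.2.1 u)
        (fun x => pd p₀ x.1.2 x.2.2 v) hz,
      sum_antidiagonal_choose_succ_mul (fun i i' => ∑ j ∈ antidiagonal b, (b.choose j.1 : ℝ) *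
        (pd p₀ i j.1 u z * pd p₀ i' j.2 v z)),
      ← sum_add_distrib, sum_product]
    · refine sum_congr rfl fun i hi => ?_
      have hi' := mem_antidiagonal.1 hi
      rw [← Nat.choose_symm_of_eq_add hi'.symm, ← mul_add, ← sum_add_distrib, mul_sum]
      refine sum_congr rfl fun j hj => ?_
      have hj' := mem_antidiagonal.1 hj
      rw [pd_succ_left hp₀ hu (by omega) hz, pd_succ_left hp₀ hv (by omega) hz]
      ring
    · intro x hx
      have h1 := mem_antidiagonal.1 (mem_product.1 hx).1
      have h2 := mem_antidiagonal.1 (mem_product.1 hx).2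
      exact pd_diff hp₀ hu (by omega) z hz
    · intro x hx
      have h1 := mem_antidiagonal.1 (mem_product.1 hx).1
      have h2 := mem_antidiagonal.1 (mem_product.1 hx).2
      exact pd_diff hp₀ hv (by omega) z hz

open Finset in
lemma vand0 (n : ℕ) : ∀ (g : ℕ → ℕ → ℝ), ∑ k ∈ antidiagonal (n+1), ((n+1).choose k.1 : ℝ) * g k.1 k.2
    = ∑ k ∈ antidiagonal n, (n.choose k.1 : ℝ) * (g k.1 (k.2+1) + g (k.1+1) k.2) := by
  intro g
  rw [sum_antidiagonal_choose_succ_mul, ← sum_add_distrib]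
  refine sum_congr rfl fun i hi => ?_
  rw [← Nat.choose_symm_of_eq_add (mem_antidiagonal.1 hi).symm, mul_add]

open Finset in
lemma vand (a b : ℕ) : ∀ (g : ℕ → ℕ → ℝ),
    ∑ i ∈ antidiagonal a, (a.choose i.1 : ℝ) * ∑ j ∈ antidiagonal b, (b.choose j.1 : ℝ) *
        g (i.1 + j.1) (i.2 + j.2) =
    ∑ k ∈ antidiagonal (a + b), ((a + b).choose k.1 : ℝ) * g k.1 k.2 := by
  induction a with
  | zero => intro g; simp
  | succ a ih =>
    intro g
    rw [vand0 a (fun i i' => ∑ j ∈ antidiagonal b, (b.choose j.1 : ℝ) * g (i + j.1) (i' + j.2)),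
      show a + 1 + b = a + b + 1 by ring, vand0, ← ih (fun k m => g k (m+1) + g (k+1) m)]
    refine sum_congr rfl fun i hi => ?_
    rw [← sum_add_distrib]
    congr 1
    refine sum_congr rfl fun j hj => ?_
    rw [← mul_add, add_right_comm i.1 1, add_right_comm i.2 1]

lemma fact_bd (k : ℕ) : ((k : ℝ) + 1) ^ 3 * ((k - 3).factorial : ℝ) ≤ 64 * (k.factorial : ℝ) := by
  rcases Nat.lt_or_ge k 3 with h | h
  · interval_cases k <;> norm_num [Nat.factorial]
  · obtain ⟨m, rfl⟩ := Nat.exists_eq_add_of_le' h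
    simp only [Nat.add_sub_cancel, Nat.factorial_succ]
    push_cast
    have : (0:ℝ) ≤ m.factorial := by positivity
    have hm : (0:ℝ) ≤ m := by positivity
    have : ((m:ℝ) + 3 + 1)^3 ≤ 64 * ((m + 2 + 1) * ((m + 1 + 1) * (m + 1))) := by
      nlinarith [mul_nonneg hm hm, mul_nonneg (mul_nonneg hm hm) hm]
    nlinarith


open Finset in
lemma sum_sq_bd (n : ℕ) : ∑ k ∈ range (n + 1), 1 / ((k : ℝ) + 1) ^ 2 ≤ 2 - 1 / ((n : ℝ) + 1) := by
  induction n with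
  | zero => norm_num
  | succ n ih =>
    rw [sum_range_succ]
    have hn : (0:ℝ) ≤ n := by positivity
    have : 1 / ((n:ℝ) + 1 + 1) ^ 2 ≤ 1 / ((n:ℝ) + 1) - 1 / ((n:ℝ) + 1 + 1) := by
      rw [div_sub_div _ _ (by positivity) (by positivity), div_le_div_iff₀ (by positivity) (by positivity)]
      nlinarith
    push_cast
    linarith

open Finset in
lemma sum_sq_bd' (n : ℕ) : ∑ k ∈ antidiagonal n, 1 / ((k.1 : ℝ) + 1) ^ 2 ≤ 2 := by
  rw [Finset.Nat.sum_antidiagonal_eq_sum_range_succ (fun i _ => 1 / ((i : ℝ) + 1) ^ 2)]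
  have := sum_sq_bd n
  have h : 0 ≤ 1 / ((n:ℝ) + 1) := by positivity
  linarith

open Finset in
lemma sum_sq_bd'' (n : ℕ) : ∑ k ∈ antidiagonal n, 1 / ((k.2 : ℝ) + 1) ^ 2 ≤ 2 := by
  have h := Finset.Nat.sum_antidiagonal_swap (n := n) (f := fun k : ℕ × ℕ => 1 / ((k.1 : ℝ) + 1) ^ 2)
  simp only [Prod.fst_swap] at h
  rw [h]
  exact sum_sq_bd' n

lemma fact_cube (n : ℕ) (h : 3 ≤ n) : (n.factorial : ℝ) ≤ (n : ℝ) ^ 3 * ((n - 3).factorial : ℝ) := by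
  obtain ⟨m, rfl⟩ := Nat.exists_eq_add_of_le' h
  simp only [Nat.add_sub_cancel, Nat.factorial_succ]
  push_cast
  have h1 : (0:ℝ) ≤ m.factorial := by positivity
  have hm : (0:ℝ) ≤ m := by positivity
  have : ((m:ℝ) + 2 + 1) * ((m + 1 + 1) * (m + 1)) ≤ ((m:ℝ) + 3) ^ 3 := by
    nlinarith [mul_nonneg hm hm, mul_nonneg (mul_nonneg hm hm) hm]
  nlinarith

lemma term_bd (n k m : ℕ) (hn : 3 ≤ n) (h : k + m = n) :
    (n.choose k : ℝ) * (((k - 3).factorial : ℝ) * ((m - 3).factorial : ℝ)) ≤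
      16384 * ((n - 3).factorial : ℝ) * (1 / ((k : ℝ) + 1) ^ 2 + 1 / ((m : ℝ) + 1) ^ 2) := by
  have hC : (n.choose k : ℝ) * (k.factorial : ℝ) * (m.factorial : ℝ) = n.factorial := by
    have := Nat.choose_mul_factorial_mul_factorial (show k ≤ n by omega)
    rw [show n - k = m by omega] at this
    exact_mod_cast this
  have hk := fact_bd k
  have hm := fact_bd m
  have hnn := fact_cube n hn
  have hx : (1:ℝ) ≤ (k:ℝ) + 1 := by simp
  have hy : (1:ℝ) ≤ (m:ℝ) + 1 := by simp
  have hnxy : (n:ℝ) ≤ ((k:ℝ) + 1) + ((m:ℝ) + 1) := by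
    rw [← h]; push_cast; linarith
  set x := (k:ℝ) + 1
  set y := (m:ℝ) + 1
  have hn3 : (n:ℝ) ^ 3 ≤ 4 * (x ^ 3 + y ^ 3) := by
    calc (n:ℝ) ^ 3 ≤ (x + y) ^ 3 := by gcongr
      _ ≤ 4 * (x ^ 3 + y ^ 3) := by nlinarith [mul_nonneg (show 0 ≤ x + y by linarith) (sq_nonneg (x - y))]
  have e1 : ((k - 3).factorial : ℝ) ≤ 64 * (k.factorial : ℝ) / x ^ 3 := by
    rw [le_div_iff₀ (by positivity)]; linarith
  have e2 : ((m - 3).factorial : ℝ) ≤ 64 * (m.factorial : ℝ) / y ^ 3 := by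
    rw [le_div_iff₀ (by positivity)]; linarith
  have x0 : 0 < x := by linarith
  have y0 : 0 < y := by linarith
  calc (n.choose k : ℝ) * (((k - 3).factorial : ℝ) * ((m - 3).factorial : ℝ))
      ≤ (n.choose k : ℝ) * ((64 * (k.factorial : ℝ) / x ^ 3) * (64 * (m.factorial : ℝ) / y ^ 3)) := by
        gcongr
    _ = 4096 * ((n.choose k : ℝ) * (k.factorial : ℝ) * (m.factorial : ℝ)) / (x ^ 3 * y ^ 3) := by
        field_simp; ring
    _ = 4096 * (n.factorial : ℝ) / (x ^ 3 * y ^ 3) := by rw [hC]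
    _ ≤ 4096 * ((4 * (x ^ 3 + y ^ 3)) * ((n - 3).factorial : ℝ)) / (x ^ 3 * y ^ 3) := by
        gcongr
        exact hnn.trans (by gcongr)
    _ = 16384 * ((n - 3).factorial : ℝ) * (1 / x ^ 3 + 1 / y ^ 3) := by
        field_simp; ring
    _ ≤ _ := by
        gcongr 16384 * ((n - 3).factorial : ℝ) * (1 / ?_ + 1 / ?_)
        · exact pow_le_pow_right₀ hx (by norm_num)
        · exact pow_le_pow_right₀ hy (by norm_num)

open Finset in
lemma comb_bd (n : ℕ) (hn : 3 ≤ n) :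
    ∑ k ∈ antidiagonal n, (n.choose k.1 : ℝ) *
      (((k.1 - 3).factorial : ℝ) * ((k.2 - 3).factorial : ℝ)) ≤ 65536 * ((n - 3).factorial : ℝ) := by
  calc _ ≤ ∑ k ∈ antidiagonal n, 16384 * ((n - 3).factorial : ℝ) *
        (1 / ((k.1 : ℝ) + 1) ^ 2 + 1 / ((k.2 : ℝ) + 1) ^ 2) :=
        sum_le_sum fun k hk => term_bd n k.1 k.2 hn (mem_antidiagonal.1 hk)
    _ = 16384 * ((n - 3).factorial : ℝ) * (∑ k ∈ antidiagonal n, 1 / ((k.1 : ℝ) + 1) ^ 2 +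
          ∑ k ∈ antidiagonal n, 1 / ((k.2 : ℝ) + 1) ^ 2) := by
        rw [← mul_sum, sum_add_distrib]
    _ ≤ 16384 * ((n - 3).factorial : ℝ) * (2 + 2) := by
        gcongr
        · exact sum_sq_bd' n
        · exact sum_sq_bd'' n
    _ = _ := by ring

lemma rpow_bd (n k m : ℕ) (s : ℝ) (hs : 1 ≤ s) (hn : 3 ≤ n) (h : k + m = n) :
    ((k - 3).factorial : ℝ) ^ s * ((m - 3).factorial : ℝ) ^ s ≤
      (((k - 3).factorial : ℝ) * ((m - 3).factorial : ℝ)) * ((n - 3).factorial : ℝ) ^ (s - 1) := by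
  have hP : (k - 3).factorial * (m - 3).factorial ≤ (n - 3).factorial :=
    (Nat.le_of_dvd (Nat.factorial_pos _) (Nat.factorial_mul_factorial_dvd_factorial_add _ _)).trans
      (Nat.factorial_le (by omega))
  have hP' : ((k - 3).factorial : ℝ) * ((m - 3).factorial : ℝ) ≤ ((n - 3).factorial : ℝ) := by
    exact_mod_cast hP
  rw [← Real.mul_rpow (by positivity) (by positivity)]
  set P := ((k - 3).factorial : ℝ) * ((m - 3).factorial : ℝ) with hPd
  have P0 : 0 < P := by rw [hPd]; positivity
  calc P ^ s = P ^ (1 + (s - 1)) := by congr 1; ring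
    _ = P * P ^ (s - 1) := by rw [Real.rpow_add P0, Real.rpow_one]
    _ ≤ _ := by
      gcongr

lemma supS_nonneg (p₀ : ℝ) (f : ℝ × ℝ → ℝ) : 0 ≤ supS p₀ f := by
  apply Real.sSup_nonneg
  rintro _ ⟨z, _, rfl⟩
  exact abs_nonneg _

lemma le_ck {p₀ K : ℝ} {k a b : ℕ} {f : ℝ × ℝ → ℝ} (hK : cknorm p₀ k f ≤ K) (hab : a + b ≤ k)
    (hb : bddS p₀ (pd p₀ a b f)) {z : ℝ × ℝ} (hz : z ∈ Strip p₀) : |pd p₀ a b f z| ≤ K := by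
  refine (le_csSup hb ⟨z, hz, rfl⟩).trans (le_trans ?_ hK)
  change supS p₀ (pd p₀ a b f) ≤ _
  unfold cknorm
  refine le_trans ?_ (Finset.single_le_sum (f := fun a => ∑ b ∈ Finset.range (k + 1 - a), supS p₀ (pd p₀ a b f)) (fun i _ => Finset.sum_nonneg fun j _ => supS_nonneg _ _)
    (Finset.mem_range.2 (show a < k + 1 by omega)))
  exact Finset.single_le_sum (f := fun b => supS p₀ (pd p₀ a b f)) (fun j _ => supS_nonneg _ _)
    (Finset.mem_range.2 (show b < k + 1 - a by omega))

lemma W_mono {H₁ H₂ : ℝ} (h1 : 1 ≤ H₁) (h2 : H₁ ≤ H₂) {a e : ℤ} {b c : ℕ}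
    (he : e ≤ a) (hc : c ≤ b) : H₁ ^ e * H₂ ^ c ≤ H₁ ^ a * H₂ ^ b := by
  have h3 : 1 ≤ H₂ := h1.trans h2
  have h0 : 0 < H₁ := by linarith
  exact mul_le_mul (zpow_le_zpow_right₀ h1 he) (pow_le_pow_right₀ h3 hc) (by positivity)
    (by positivity)

lemma W_one {H₁ H₂ : ℝ} (h1 : 1 ≤ H₁) (h2 : H₁ ≤ H₂) {a b : ℕ} (hab : 3 ≤ a + b) :
    1 ≤ H₁ ^ ((a : ℤ) - 2) * H₂ ^ b := by
  have h0 : 0 < H₁ := by linarith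
  calc 1 ≤ H₁ ^ ((a : ℤ) - 2 + b) := one_le_zpow₀ h1 (by omega)
    _ = H₁ ^ ((a : ℤ) - 2) * H₁ ^ b := by rw [zpow_add₀ h0.ne', zpow_natCast]
    _ ≤ _ := by gcongr

lemma one_le_fact_rpow (n : ℕ) {s : ℝ} (hs : 1 ≤ s) : 1 ≤ (n.factorial : ℝ) ^ s :=
  Real.one_le_rpow (by exact_mod_cast Nat.factorial_pos n) (by linarith)

lemma pt_bd {p₀ μ s M H₁ H₂ : ℝ} (hs : 1 ≤ s) (hM : 0 ≤ M) (hM1 : 1 ≤ M) {α₀ : ℕ × ℕ} {u v : ℝ × ℝ → ℝ}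
    (hα : 3 ≤ α₀.1 + α₀.2) (h1 : 1 ≤ H₁) (h2 : H₁ ≤ H₂)
    (hKu : cknorm p₀ 3 u ≤ M) (hKv : cknorm p₀ 2 v ≤ M)
    (hu : memA p₀ μ s H₁ H₂ α₀ 3 u) (hv : memA p₀ μ s H₁ H₂ α₀ 2 v)
    {a b i i' j j' : ℕ} (ha : a ≤ α₀.1) (hb : b ≤ α₀.2) (hab : 3 ≤ a + b) (hi : i + i' = a)
    (hj : j + j' = b) {z : ℝ × ℝ} (hz : z ∈ Strip p₀) :
    |pd p₀ i j u z| * |pd p₀ i' j' v z| ≤ M ^ 2 * (H₁ ^ ((a : ℤ) - 2) * H₂ ^ b) *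
      (((i + j - 3).factorial : ℝ) ^ s * ((i' + j' - 3).factorial : ℝ) ^ s) := by
  have h0 : 0 < H₁ := by linarith
  have h0' : 0 < H₂ := by linarith
  have key : ∀ X Y : ℝ, 0 ≤ X → 0 ≤ Y → X * Y ≤ H₁ ^ ((a : ℤ) - 2) * H₂ ^ b →
      |pd p₀ i j u z| ≤ M * X * ((i + j - 3).factorial : ℝ) ^ s →
      |pd p₀ i' j' v z| ≤ M * Y * ((i' + j' - 3).factorial : ℝ) ^ s →
      |pd p₀ i j u z| * |pd p₀ i' j' v z| ≤ M ^ 2 * (H₁ ^ ((a : ℤ) - 2) * H₂ ^ b) *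
      (((i + j - 3).factorial : ℝ) ^ s * ((i' + j' - 3).factorial : ℝ) ^ s) := by
    intro X Y hX hY hXY hU hV
    calc _ ≤ (M * X * ((i + j - 3).factorial : ℝ) ^ s) * (M * Y * ((i' + j' - 3).factorial : ℝ) ^ s) := by
          gcongr
      _ = M ^ 2 * (X * Y) * (((i + j - 3).factorial : ℝ) ^ s * ((i' + j' - 3).factorial : ℝ) ^ s) := by ring
      _ ≤ _ := by gcongr
  have u3 : i + j ≤ 3 → |pd p₀ i j u z| ≤ M * 1 * ((i + j - 3).factorial : ℝ) ^ s := by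
    intro h
    have h3 := le_ck hKu h (hu.1.2.1 i j (by omega)) hz
    have := one_le_fact_rpow (i + j - 3) hs
    nlinarith
  have v3 : i' + j' ≤ 2 → |pd p₀ i' j' v z| ≤ M * 1 * ((i' + j' - 3).factorial : ℝ) ^ s := by
    intro h
    have h3 := le_ck hKv h (hv.1.2.1 i' j' (by omega)) hz
    have := one_le_fact_rpow (i' + j' - 3) hs
    nlinarith
  have u4 : 4 ≤ i + j → |pd p₀ i j u z| ≤ M * (H₁ ^ ((i : ℤ) - 3) * H₂ ^ j) * ((i + j - 3).factorial : ℝ) ^ s := by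
    intro h
    have h3 := hu.2 i j (by omega) (by omega) h z hz
    refine h3.trans ?_
    have hf : ((i + j - (3 + 1)).factorial : ℝ) ^ s ≤ ((i + j - 3).factorial : ℝ) ^ s := by
      apply Real.rpow_le_rpow (by positivity) _ (by linarith)
      exact_mod_cast Nat.factorial_le (by omega)
    have hX : 0 ≤ H₁ ^ ((i : ℤ) - 3) * H₂ ^ j := by positivity
    push_cast
    calc _ ≤ (H₁ ^ ((i : ℤ) - 3) * H₂ ^ j) * ((i + j - 3).factorial : ℝ) ^ s := by gcongr
      _ ≤ _ := by
        exact mul_le_mul_of_nonneg_right (le_mul_of_one_le_left hX hM1) (by positivity)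
  have v4 : 3 ≤ i' + j' → |pd p₀ i' j' v z| ≤ M * (H₁ ^ ((i' : ℤ) - 2) * H₂ ^ j') * ((i' + j' - 3).factorial : ℝ) ^ s := by
    intro h
    have h3 := hv.2 i' j' (by omega) (by omega) h z hz
    refine h3.trans ?_
    have hX : 0 ≤ H₁ ^ ((i' : ℤ) - 2) * H₂ ^ j' := by positivity
    push_cast
    exact mul_le_mul_of_nonneg_right (le_mul_of_one_le_left hX hM1) (by positivity)
  rcases Nat.lt_or_ge (i + j) 4 with hk | hk <;> rcases Nat.lt_or_ge (i' + j') 3 with hm | hm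
  · refine key 1 1 zero_le_one zero_le_one ?_ (u3 (by omega)) (v3 (by omega))
    simpa using W_one h1 h2 hab
  · refine key 1 _ zero_le_one (by positivity) ?_ (u3 (by omega)) (v4 hm)
    rw [one_mul]
    exact W_mono h1 h2 (by omega) (by omega)
  · refine key _ 1 (by positivity) zero_le_one ?_ (u4 hk) (v3 (by omega))
    rw [mul_one]
    exact W_mono h1 h2 (by omega) (by omega)
  · refine key _ _ (by positivity) (by positivity) ?_ (u4 hk) (v4 hm)
    have : H₁ ^ ((i : ℤ) - 3) * H₂ ^ j * (H₁ ^ ((i' : ℤ) - 2) * H₂ ^ j') =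
        H₁ ^ (((i : ℤ) - 3) + ((i' : ℤ) - 2)) * H₂ ^ (j + j') := by
      rw [zpow_add₀ h0.ne', pow_add]; ring
    rw [this]
    exact W_mono h1 h2 (by omega) (by omega)

/-- If `u ∈ 𝒜₃` and `v ∈ 𝒜₂` then `c̃_*⁻¹ uv ∈ 𝒜₂` for a constant `c̃_*` depending only
on the `C³`-norm of `u` and the `C²`-norm of `v` (and independent of `α₀, H₁, H₂`). -/
theorem memA_three_two_mul (p₀ μ s K : ℝ) (hp₀ : p₀ < 0) (hμ : μ ∈ Set.Ioo (0 : ℝ) 1)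
    (hs : 1 ≤ s) :
    ∃ c : ℝ, 1 ≤ c ∧ ∀ (α₀ : ℕ × ℕ) (H₁ H₂ : ℝ) (u v : ℝ × ℝ → ℝ),
      3 ≤ α₀.1 + α₀.2 → 1 ≤ H₁ → H₁ ≤ H₂ →
      cknorm p₀ 3 u ≤ K → cknorm p₀ 2 v ≤ K →
      memA p₀ μ s H₁ H₂ α₀ 3 u → memA p₀ μ s H₁ H₂ α₀ 2 v →
      ∀ a b : ℕ, a ≤ α₀.1 → b ≤ α₀.2 → 3 ≤ a + b → ∀ z ∈ Strip p₀,
        |pd p₀ a b (fun y => u y * v y) z| ≤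
          c * H₁ ^ ((a : ℤ) - 2) * H₂ ^ b * (Nat.factorial (a + b - 3) : ℝ) ^ s := by
  have hM1 : 1 ≤ max K 1 := le_max_right _ _
  have hMK : K ≤ max K 1 := le_max_left _ _
  set M := max K 1
  refine ⟨65536 * M ^ 2, by nlinarith, ?_⟩
  intro α₀ H₁ H₂ u v hα h1 h2 hKu hKv hu hv a b ha hb hab z hz
  have h0 : 0 < H₁ := by linarith
  have h0' : 0 < H₂ := by linarith
  have hN : a + b ≤ α₀.1 + α₀.2 := by omega
  rw [leib hp₀ hu.1.1 hv.1.1 a b hN z hz]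
  set W := H₁ ^ ((a : ℤ) - 2) * H₂ ^ b with hW
  have hW0 : 0 ≤ W := by positivity
  have hF : (0 : ℝ) < ((a + b - 3).factorial : ℝ) := by positivity
  set F := ((a + b - 3).factorial : ℝ) with hFd
  set g : ℕ → ℕ → ℝ := fun k m => M ^ 2 * W * F ^ (s - 1) *
    (((k - 3).factorial : ℝ) * ((m - 3).factorial : ℝ)) with hg
  calc _ ≤ ∑ i ∈ Finset.HasAntidiagonal.antidiagonal a, (a.choose i.1 : ℝ) * ∑ j ∈ Finset.HasAntidiagonal.antidiagonal b,
        (b.choose j.1 : ℝ) * g (i.1 + j.1) (i.2 + j.2) := by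
        refine (Finset.abs_sum_le_sum_abs _ _).trans (Finset.sum_le_sum fun i hi => ?_)
        rw [abs_mul, Nat.abs_cast]
        refine mul_le_mul_of_nonneg_left ?_ (by positivity)
        refine (Finset.abs_sum_le_sum_abs _ _).trans (Finset.sum_le_sum fun j hj => ?_)
        rw [abs_mul, Nat.abs_cast, abs_mul]
        refine mul_le_mul_of_nonneg_left ?_ (by positivity)
        have hi' := Finset.HasAntidiagonal.mem_antidiagonal.1 hi
        have hj' := Finset.HasAntidiagonal.mem_antidiagonal.1 hj
        refine (pt_bd hs (by linarith) hM1 hα h1 h2 (hKu.trans hMK) (hKv.trans hMK) hu hv ha hb hab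
          hi' hj' hz).trans ?_
        have := rpow_bd (a + b) (i.1 + j.1) (i.2 + j.2) s hs hab (by omega)
        calc _ ≤ M ^ 2 * W * ((((i.1 + j.1 - 3).factorial : ℝ) * ((i.2 + j.2 - 3).factorial : ℝ)) *
              F ^ (s - 1)) := mul_le_mul_of_nonneg_left this (by positivity)
          _ = _ := by simp only [hg]; ring
    _ = ∑ k ∈ Finset.HasAntidiagonal.antidiagonal (a + b), ((a + b).choose k.1 : ℝ) * g k.1 k.2 := vand a b g
    _ = M ^ 2 * W * F ^ (s - 1) * ∑ k ∈ Finset.HasAntidiagonal.antidiagonal (a + b), ((a + b).choose k.1 : ℝ) *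
          (((k.1 - 3).factorial : ℝ) * ((k.2 - 3).factorial : ℝ)) := by
        rw [Finset.mul_sum]
        refine Finset.sum_congr rfl fun k _ => ?_
        simp only [hg]; ring
    _ ≤ M ^ 2 * W * F ^ (s - 1) * (65536 * F) :=
        mul_le_mul_of_nonneg_left (comb_bd (a + b) hab) (by positivity)
    _ = 65536 * M ^ 2 * H₁ ^ ((a : ℤ) - 2) * H₂ ^ b * F ^ s := by
        have : F ^ s = F ^ (s - 1) * F := by
          rw [← Real.rpow_add_one hF.ne']; congr 1; ring
        rw [this, hW]; ring
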